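/- Let N ≥ 2, let Ω ⊂ ℝ^N be a nonempty bounded open set, and let p > 2. Then there exists a smooth function u : ℝ^N → ℝ with compact support contained in Ω such that J(u) < 0. -/

import Mathlib

open MeasureTheory Metric Set

/-- The free-boundary energy functional
`J(u) = ∫_Ω [ (1/2)|∇u|² + χ_{u>1} − (1/p)(u−1)₊^p ] dx`. -/
noncomputable def J {N : ℕ} (Ω : Set (EuclideanSpace ℝ (Fin N))) (p : ℝ)
    (u : EuclideanSpace ℝ (Fin N) → ℝ) : ℝ :=
  ∫ x in Ω, ((1 / 2) * ‖gradient u x‖ ^ 2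
    + Set.indicator {y | 1 < u y} (fun _ => (1 : ℝ)) x
    - (1 / p) * (max (u x - 1) 0) ^ p)


theorem stmt_12 {N : ℕ} (hN : 2 ≤ N) (Ω : Set (EuclideanSpace ℝ (Fin N)))
    (hΩo : IsOpen Ω) (hΩb : Bornology.IsBounded Ω) (hΩne : Ω.Nonempty)
    (p : ℝ) (hp : 2 < p) :
    ∃ u : EuclideanSpace ℝ (Fin N) → ℝ,
      ContDiff ℝ (⊤ : ℕ∞) u ∧ HasCompactSupport u ∧ tsupport u ⊆ Ω ∧ J Ω p u < 0 := by
  obtain ⟨c, hc⟩ := hΩne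
  obtain ⟨R, hR, hRΩ⟩ := Metric.nhds_basis_closedBall.mem_iff.1 (hΩo.mem_nhds hc)
  let φ : ContDiffBump c := ⟨R / 2, R, by positivity, by linarith⟩
  have hφc : ContDiff ℝ (⊤ : ℕ∞) φ := φ.contDiff
  have hφs : HasCompactSupport φ := φ.hasCompactSupport
  have hφt : tsupport φ ⊆ Ω := by rw [φ.tsupport_eq]; exact hRΩ
  have hd : Continuous (fun x => ‖fderiv ℝ φ x‖ ^ 2) :=
    ((hφc.continuous_fderiv (by simp)).norm).pow 2
  have hds : HasCompactSupport (fun x => ‖fderiv ℝ φ x‖ ^ 2) :=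
    (hφs.fderiv ℝ).comp_left (g := fun L => ‖L‖ ^ 2) (by simp)
  have hdi : IntegrableOn (fun x => ‖fderiv ℝ φ x‖ ^ 2) Ω :=
    (hd.integrable_of_hasCompactSupport hds).integrableOn
  have hfin : volume Ω ≠ ⊤ := hΩb.measure_lt_top.ne
  have h1i : IntegrableOn (fun _ : EuclideanSpace ℝ (Fin N) => (1 : ℝ)) Ω :=
    integrableOn_const hfin
  set B := closedBall c (R / 2) with hB
  have hBΩ : B ⊆ Ω := (closedBall_subset_closedBall (by linarith)).trans hRΩ
  have hBm : MeasurableSet B := isClosed_closedBall.measurableSet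
  set A := ∫ x in Ω, ‖fderiv ℝ φ x‖ ^ 2 with hA
  have hA0 : 0 ≤ A := integral_nonneg fun x => by positivity
  set V := volume.real Ω with hV
  have hV0 : 0 ≤ V := measureReal_nonneg
  set b := volume.real B with hb
  have hb0 : 0 < b := by
    rw [hb, measureReal_def]
    exact ENNReal.toReal_pos (measure_closedBall_pos _ _ (by positivity)).ne'
      (measure_mono hBΩ |>.trans_lt hΩb.measure_lt_top).ne
  obtain ⟨s, hs, hs1⟩ := (((tendsto_rpow_atTop (show 0 < p - 2 by linarith)).eventually_gt_atTop
    ((2 * A + V) * p / b)).and (Filter.eventually_ge_atTop 1)).exists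
  have hs0 : 0 < s := by linarith
  have hp0 : 0 < p := by linarith
  have hkey : (1/2) * (s + 1)^2 * A + V - (1 / p) * s ^ p * b < 0 := by
    have e : s ^ p = s ^ (p - 2) * s ^ 2 := by
      rw [← Real.rpow_natCast s 2, ← Real.rpow_add hs0]; congr 1; push_cast; ring
    have h2 : (2 * A + V) * s ^ 2 < (1 / p) * s ^ p * b := by
      rw [div_lt_iff₀ hb0] at hs
      rw [e]
      have : 2 * A + V < (1 / p) * (s ^ (p - 2) * b) := by
        rw [one_div, inv_mul_eq_div, lt_div_iff₀ hp0]; exact hs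
      nlinarith [mul_lt_mul_of_pos_right this (pow_pos hs0 2)]
    have h3 : (1/2) * (s + 1)^2 * A ≤ 2 * s ^ 2 * A :=
      mul_le_mul_of_nonneg_right (by nlinarith) hA0
    have h4 : V ≤ V * s ^ 2 := le_mul_of_one_le_right hV0 (by nlinarith)
    nlinarith
  have hu : ContDiff ℝ (⊤ : ℕ∞) (fun x => (s + 1) * φ x) := contDiff_const.mul hφc
  have hus : HasCompactSupport (fun x => (s + 1) * φ x) := hφs.mul_left
  refine ⟨fun x => (s + 1) * φ x, hu, hus, (closure_mono ?_).trans hφt, ?_⟩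
  · intro x hx h; apply hx; simp [h]
  have hgrad : ∀ x, ‖gradient (fun x => (s + 1) * φ x) x‖ ^ 2
      = (s + 1) ^ 2 * ‖fderiv ℝ φ x‖ ^ 2 := by
    intro x
    rw [gradient, LinearIsometryEquiv.norm_map,
      fderiv_const_mul (hφc.differentiable (by simp) x), norm_smul, mul_pow]
    simp
  have hm : MeasurableSet {y | 1 < (s + 1) * φ y} :=
    (isOpen_lt continuous_const hu.continuous).measurableSet
  have hpi : Integrable (fun x => (max ((s + 1) * φ x - 1) 0) ^ p) := by
    refine Continuous.integrable_of_hasCompactSupport ?_ ?_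
    · exact ((hu.continuous.sub continuous_const).max continuous_const).rpow_const
        fun x => Or.inr hp0.le
    · exact hus.comp_left (g := fun y => (max (y - 1) 0) ^ p)
        (by simp [Real.zero_rpow hp0.ne'])
  have hbi : IntegrableOn (B.indicator fun _ => s ^ p) Ω := by
    rw [IntegrableOn, integrable_indicator_iff hBm]
    refine integrableOn_const ?_
    exact ((Measure.restrict_apply_le _ _).trans_lt
      ((measure_mono hBΩ).trans_lt hΩb.measure_lt_top)).ne
  have hle : J Ω p (fun x => (s + 1) * φ x) ≤ ∫ x in Ω, ((1/2) * (s + 1)^2 * ‖fderiv ℝ φ x‖ ^ 2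
      + 1 - (1 / p) * B.indicator (fun _ => s ^ p) x) := by
    unfold J
    simp_rw [hgrad]
    refine integral_mono ?_ ?_ ?_
    · exact (((hdi.const_mul _).const_mul _).add (h1i.indicator hm)).sub
        (hpi.integrableOn.const_mul _)
    · exact ((hdi.const_mul _).add h1i).sub (hbi.const_mul _)
    · intro x
      have i1 : Set.indicator {y | 1 < (s + 1) * φ y} (fun _ => (1 : ℝ)) x ≤ 1 := by
        rw [Set.indicator_apply]; split_ifs <;> norm_num
      have i2 : B.indicator (fun _ => s ^ p) x ≤ (max ((s + 1) * φ x - 1) 0) ^ p := by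
        by_cases hx : x ∈ B
        · have : φ x = 1 := φ.one_of_mem_closedBall hx
          rw [Set.indicator_of_mem hx, this]
          simp [hs0.le]
        · rw [Set.indicator_of_notMem hx]; positivity
      have i3 := mul_le_mul_of_nonneg_left i2 (show 0 ≤ 1 / p by positivity)
      dsimp only
      linarith
  refine hle.trans_lt (lt_of_eq_of_lt ?_ hkey)
  have hsum : Integrable (fun x => (1/2) * (s + 1)^2 * ‖fderiv ℝ φ x‖ ^ 2 + 1)
      (volume.restrict Ω) := (hdi.const_mul _).add h1i
  rw [integral_sub hsum (hbi.const_mul _),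
    integral_add (hdi.const_mul _) h1i, integral_const_mul, integral_const_mul,
    integral_indicator hBm, Measure.restrict_restrict hBm, inter_eq_self_of_subset_left hBΩ]
  simp [← hA, ← hV, ← hb]
  ring
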